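/- There exists a constant C > 0 such that for every integer n ≥ 5, every parameter c ∈ 𝒦_n, and every integer k ≥ 0, there exists a point x in the interval I_c = [c, c² + c] with f_c^{n+3k+3}(x) = x and |Df_c^{n+3k+3}(x)| ≤ C · |Df_c^{n+3k}(c)|^{1/2}. -/

import Mathlib

/-- The quadratic map `f_c(x) = x² + c`. -/
def fc (c : ℝ) : ℝ → ℝ := fun x => x ^ 2 + c

/-- The set `𝒦_n` of real parameters. -/
def Kset (n : ℕ) : Set ℝ :=
  {c : ℝ | c < 0 ∧ (∀ j : ℕ, 1 ≤ j → j ≤ n - 1 → 0 < (fc c)^[j] c) ∧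
    ∀ k : ℕ, (fc c)^[n + 3 * k + 1] c < 0 ∧ 0 < (fc c)^[n + 3 * k + 2] c}

/-!
Write `f = f_c`, `m = n + 3k`, and let `0 < s < v` be the points with `f s = 0` and `f v = s`, so
that `f³ s = c² + c` and `f³ v = c`. The conditions defining `𝒦_n` allow the inverse branch `ψ` of
`f^m` sending `f^m c` back to `c` to be extended to all of `[-v, v]`. As `f³` runs through
`[c, c² + c]` on each of `[s, v]` and `[-v, -s]`, it agrees with `ψ` at some `t` with
`s ≤ |t| ≤ v`, on the side where `ψ > c`; then `p = ψ t` is fixed by `f^(m + 3)`.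

Since `|f^m c|` stays at least `1/2` below `s`, the distortion of `f^m` between `c` and `p` is
controlled: `|Df^m(c)| (p - c)` is bounded below and `|Df^m(p)| |Df^m(c)| (p - c)²` is bounded
above. The orbit of `p` returns to `p` through a point at distance `√(p - c)` from the critical
point, so `|Df^(m + 3)(p)|` is at most a constant times `|Df^m(p)| √(p - c)`, and eliminating
`p - c` leaves the square root of `|Df^m(c)|`.
-/

open Set

section Distortion

variable {c : ℝ} {m : ℕ}

lemma fc_iterate_succ (c x : ℝ) (m : ℕ) : (fc c)^[m + 1] x = (fc c)^[m] x ^ 2 + c :=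
  Function.iterate_succ_apply' _ _ _

/-- The absolute value `|Df_c^m(x)|` of the derivative of the `m`-th iterate of `f_c`, written out
by the chain rule. -/
noncomputable def absDeriv (c : ℝ) (m : ℕ) (x : ℝ) : ℝ :=
  ∏ j ∈ Finset.range m, |2 * (fc c)^[j] x|

lemma absDeriv_nonneg (c : ℝ) (m : ℕ) (x : ℝ) : 0 ≤ absDeriv c m x :=
  Finset.prod_nonneg fun _ _ => abs_nonneg _

lemma absDeriv_succ (c : ℝ) (m : ℕ) (x : ℝ) :
    absDeriv c (m + 1) x = absDeriv c m x * |2 * (fc c)^[m] x| :=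
  Finset.prod_range_succ _ _

lemma absDeriv_add (c : ℝ) (m k : ℕ) (x : ℝ) :
    absDeriv c (m + k) x = absDeriv c m x * absDeriv c k ((fc c)^[m] x) := by
  rw [absDeriv, Finset.prod_range_add]
  simp only [absDeriv, add_comm m, Function.iterate_add_apply]

/-- The orbits of `x` and `y` are not separated by the critical point `0` at any time before `m`.
An orbit that hits `0` counts as being on both sides at that time, so the relation is not
transitive. -/
def SameItinerary (c : ℝ) (m : ℕ) (x y : ℝ) : Prop :=
  ∀ j < m, 0 ≤ (fc c)^[j] x * (fc c)^[j] y

lemma SameItinerary.symm {x y : ℝ} (h : SameItinerary c m x y) : SameItinerary c m y x :=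
  fun j hj => mul_comm ((fc c)^[j] x) _ ▸ h j hj

lemma SameItinerary.of_succ {x y : ℝ} (h : SameItinerary c (m + 1) x y) : SameItinerary c m x y :=
  fun j hj => h j (hj.trans m.lt_succ_self)

lemma SameItinerary.absDeriv_mul_absDeriv_mul_sq_le {x z : ℝ} (h : SameItinerary c m x z) :
    absDeriv c m x * absDeriv c m z * (x - z) ^ 2 ≤ ((fc c)^[m] x - (fc c)^[m] z) ^ 2 := by
  induction m with
  | zero => simp [absDeriv]
  | succ m ih =>
    have ih := ih h.of_succ
    have hsign := h m m.lt_succ_self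
    rw [absDeriv_succ, absDeriv_succ, fc_iterate_succ, fc_iterate_succ]
    set X := (fc c)^[m] x
    set Z := (fc c)^[m] z
    have amgm : |2 * X| * |2 * Z| ≤ (X + Z) ^ 2 := by
      rw [← abs_mul, abs_of_nonneg (by linarith)]
      linarith [four_mul_le_pow_two_add X Z]
    calc absDeriv c m x * |2 * X| * (absDeriv c m z * |2 * Z|) * (x - z) ^ 2
        = absDeriv c m x * absDeriv c m z * (x - z) ^ 2 * (|2 * X| * |2 * Z|) := by ring
      _ ≤ (X - Z) ^ 2 * (X + Z) ^ 2 := by gcongr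
      _ = (X ^ 2 + c - (Z ^ 2 + c)) ^ 2 := by ring

lemma SameItinerary.iterate_sub_mul_iterate_sub_nonneg {a q p : ℝ} (haq : SameItinerary c m a q)
    (hqp : SameItinerary c m q p) (hap : SameItinerary c m a p)
    (hbetween : 0 ≤ (a - q) * (q - p)) :
    0 ≤ ((fc c)^[m] a - (fc c)^[m] q) * ((fc c)^[m] q - (fc c)^[m] p) := by
  induction m with
  | zero => exact hbetween
  | succ m ih =>
    have ih := ih haq.of_succ hqp.of_succ hap.of_succ
    have saq := haq m m.lt_succ_self
    have sqp := hqp m m.lt_succ_self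
    have sap := hap m m.lt_succ_self
    simp only [fc_iterate_succ]
    set A := (fc c)^[m] a
    set Q := (fc c)^[m] q
    set P := (fc c)^[m] p
    calc 0 ≤ (A - Q) * (Q - P) * (A * Q + A * P + Q ^ 2 + Q * P) := by positivity
      _ = (A ^ 2 + c - (Q ^ 2 + c)) * (Q ^ 2 + c - (P ^ 2 + c)) := by ring

-- The cross-ratio inequality for maps of negative Schwarzian derivative, in the limit where two of
-- the four points merge at `q`.
lemma SameItinerary.abs_sub_mul_abs_sub_mul_abs_sub_le {a q p : ℝ} (haq : SameItinerary c m a q)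
    (hqp : SameItinerary c m q p) (hap : SameItinerary c m a p)
    (hbetween : 0 ≤ (a - q) * (q - p)) :
    |a - p| * |(fc c)^[m] a - (fc c)^[m] q| * |(fc c)^[m] q - (fc c)^[m] p| ≤
      absDeriv c m q * |(fc c)^[m] a - (fc c)^[m] p| * (|a - q| * |q - p|) := by
  induction m with
  | zero => simp [absDeriv, mul_assoc]
  | succ m ih =>
    have ih := ih haq.of_succ hqp.of_succ hap.of_succ
    have between := haq.of_succ.iterate_sub_mul_iterate_sub_nonneg hqp.of_succ hap.of_succ hbetween
    have saq := haq m m.lt_succ_self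
    have sqp := hqp m m.lt_succ_self
    have sap := hap m m.lt_succ_self
    simp only [absDeriv_succ, fc_iterate_succ, add_sub_add_right_eq_sub, sq_sub_sq,
      abs_mul _ (_ - _)]
    set A := (fc c)^[m] a
    set Q := (fc c)^[m] q
    set P := (fc c)^[m] p
    have step : |A + Q| * |Q + P| ≤ |2 * Q| * |A + P| := by
      rw [← abs_mul, ← abs_mul, abs_of_nonneg (by nlinarith [sq_nonneg Q])]
      exact le_trans (by linarith) (le_abs_self _)
    have := absDeriv_nonneg c m q
    calc |a - p| * (|A + Q| * |A - Q|) * (|Q + P| * |Q - P|)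
        = |a - p| * |A - Q| * |Q - P| * (|A + Q| * |Q + P|) := by ring
      _ ≤ absDeriv c m q * |A - P| * (|a - q| * |q - p|) * (|2 * Q| * |A + P|) := by gcongr
      _ = _ := by ring

lemma SameItinerary.sq_le_mul_absDeriv_mul_sub {a q p δ M : ℝ} (haq : SameItinerary c m a q)
    (hqp : SameItinerary c m q p) (hap : SameItinerary c m a p) (a_lt_q : a < q) (q_lt_p : q < p)
    (hδ : 0 ≤ δ) (hδaq : δ ≤ |(fc c)^[m] a - (fc c)^[m] q|)
    (hδqp : δ ≤ |(fc c)^[m] q - (fc c)^[m] p|) (hM : |(fc c)^[m] a - (fc c)^[m] p| ≤ M) :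
    δ ^ 2 ≤ M * absDeriv c m q * (p - q) := by
  have distortion := haq.abs_sub_mul_abs_sub_mul_abs_sub_le hqp hap
    (mul_nonneg_of_nonpos_of_nonpos (by linarith) (by linarith))
  rw [abs_of_neg (show a - p < 0 by linarith), abs_of_neg (show a - q < 0 by linarith),
    abs_of_neg (show q - p < 0 by linarith)] at distortion
  have := absDeriv_nonneg c m q
  have hpq : 0 ≤ -(q - p) := by linarith
  have haq0 : 0 < -(a - q) := by linarith
  have hap0 : 0 ≤ -(a - p) := by linarith
  have hle : -(a - q) ≤ -(a - p) := by linarith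
  refine le_of_mul_le_mul_left ?_ haq0
  calc -(a - q) * δ ^ 2 = -(a - q) * δ * δ := by ring
    _ ≤ -(a - p) * |(fc c)^[m] a - (fc c)^[m] q| * |(fc c)^[m] q - (fc c)^[m] p| := by gcongr
    _ ≤ absDeriv c m q * |(fc c)^[m] a - (fc c)^[m] p| * (-(a - q) * -(q - p)) := distortion
    _ ≤ absDeriv c m q * M * (-(a - q) * -(q - p)) := by gcongr
    _ = -(a - q) * (M * absDeriv c m q * (p - q)) := by ring

end Distortion

section Preimages

variable {c x y : ℝ}

lemma fc_le_fc_of_abs_le_abs (h : |x| ≤ |y|) : fc c x ≤ fc c y :=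
  add_le_add_left (sq_le_sq.mpr h) c

lemma fc_eq_fc_of_abs_eq_abs (h : |x| = |y|) : fc c x = fc c y :=
  (fc_le_fc_of_abs_le_abs h.le).antisymm (fc_le_fc_of_abs_le_abs h.ge)

/-- The nonnegative zero of `f_c`, for `c ≤ 0`. -/
noncomputable def root (c : ℝ) : ℝ := √(-c)

/-- The nonnegative preimage of `root c` under `f_c`, for `c ≤ 0`. -/
noncomputable def rootPreimage (c : ℝ) : ℝ := √(root c - c)

lemma root_nonneg (c : ℝ) : 0 ≤ root c := Real.sqrt_nonneg _

lemma rootPreimage_nonneg (c : ℝ) : 0 ≤ rootPreimage c := Real.sqrt_nonneg _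

lemma fc_root (hc : c ≤ 0) : fc c (root c) = 0 := by
  rw [fc, root, Real.sq_sqrt (by linarith), neg_add_cancel]

lemma fc_rootPreimage (hc : c ≤ 0) : fc c (rootPreimage c) = root c := by
  rw [fc, rootPreimage, Real.sq_sqrt (by linarith [root_nonneg c]), sub_add_cancel]

lemma root_le_rootPreimage (c : ℝ) : root c ≤ rootPreimage c :=
  Real.sqrt_le_sqrt (by linarith [root_nonneg c])

lemma root_le_of_fc_nonneg (hy : 0 ≤ y) (h : 0 ≤ fc c y) : root c ≤ y :=
  Real.sqrt_le_iff.mpr ⟨hy, by unfold fc at h; linarith⟩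

lemma rootPreimage_le_of_root_le_fc (hy : 0 ≤ y) (h : root c ≤ fc c y) : rootPreimage c ≤ y :=
  Real.sqrt_le_iff.mpr ⟨hy, by unfold fc at h; linarith⟩

lemma rootPreimage_le_two (hc : -2 ≤ c) : rootPreimage c ≤ 2 := by
  have : root c ≤ 2 := root_le_of_fc_nonneg (by norm_num) (by unfold fc; linarith)
  exact rootPreimage_le_of_root_le_fc (by norm_num) (by unfold fc; linarith)

lemma abs_le_root_sub_half (hc : c ≤ -1) (h1 : fc c y ≤ 0) (h2 : 0 ≤ fc c (fc c y)) :
    |y| ≤ root c - 1 / 2 := by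
  have root_sq : root c ^ 2 + c = 0 := fc_root (by linarith)
  have one_le : 1 ≤ root c := Real.one_le_sqrt.mpr (by linarith)
  have : root c ≤ -fc c y :=
    root_le_of_fc_nonneg (by linarith) ((fc_eq_fc_of_abs_eq_abs (abs_neg _)).symm ▸ h2)
  have y_sq : y ^ 2 ≤ root c ^ 2 - root c := by unfold fc at this; linarith
  exact abs_le_of_sq_le_sq (by linarith [sub_sq (root c) (1 / 2)]) (by linarith)

lemma fc_iterate_three_of_abs_eq_root (hc : c ≤ 0) (hx : |x| = root c) :
    (fc c)^[3] x = c ^ 2 + c := by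
  have : fc c x = 0 := by
    rw [← fc_root hc, fc_eq_fc_of_abs_eq_abs (hx.trans (abs_of_nonneg (root_nonneg c)).symm)]
  simp only [Function.iterate_succ_apply, Function.iterate_zero_apply, this]
  simp [fc]

lemma fc_iterate_three_of_abs_eq_rootPreimage (hc : c ≤ 0) (hx : |x| = rootPreimage c) :
    (fc c)^[3] x = c := by
  have : fc c x = root c := by
    rw [← fc_rootPreimage hc,
      fc_eq_fc_of_abs_eq_abs (hx.trans (abs_of_nonneg (rootPreimage_nonneg c)).symm)]
  simp only [Function.iterate_succ_apply, Function.iterate_zero_apply, this, fc_root hc]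
  simp [fc]

lemma absDeriv_three_le (hc : c ≤ 0) (hv : rootPreimage c ≤ 2) (hs : root c ≤ |x|)
    (hx : |x| ≤ rootPreimage c) : absDeriv c 3 x ≤ 32 * √((fc c)^[3] x - c) := by
  have fc_nonneg : 0 ≤ fc c x :=
    (fc_root hc).symm.trans_le (fc_le_fc_of_abs_le_abs (by rwa [abs_of_nonneg (root_nonneg c)]))
  have fc_le : fc c x ≤ root c := (fc_le_fc_of_abs_le_abs
    (by rwa [abs_of_nonneg (rootPreimage_nonneg c)])).trans_eq (fc_rootPreimage hc)
  have abs_fc_le : |fc c x| ≤ 2 := by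
    rw [abs_of_nonneg fc_nonneg]; linarith
  have last : |(fc c)^[2] x| = √((fc c)^[3] x - c) := by
    rw [fc_iterate_succ c x 2, add_sub_cancel_right, Real.sqrt_sq_eq_abs]
  calc absDeriv c 3 x = 2 * |x| * (2 * |fc c x|) * (2 * |(fc c)^[2] x|) := by
        simp [absDeriv, Finset.prod_range_succ]
    _ ≤ 2 * 2 * (2 * 2) * (2 * |(fc c)^[2] x|) := by gcongr; exact hx.trans hv
    _ = 32 * √((fc c)^[3] x - c) := by rw [last]; ring

end Preimages

section InverseBranch

variable {c : ℝ}

/-- `ψ` is a continuous inverse branch of `f_c^m` on `D` that sends `f_c^m(x)` back to `x`, and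
whose values all have the same itinerary for `m` steps. -/
structure IsInverseBranch (c x : ℝ) (m : ℕ) (D : Set ℝ) (ψ : ℝ → ℝ) : Prop where
  continuousOn : ContinuousOn ψ D
  leftInvOn : LeftInvOn (fc c)^[m] ψ D
  apply_iterate : ψ ((fc c)^[m] x) = x
  sameItinerary : ∀ t ∈ D, ∀ u ∈ D, SameItinerary c m (ψ t) (ψ u)

namespace IsInverseBranch

variable {x : ℝ} {m k : ℕ} {D E : Set ℝ} {ψ φ : ℝ → ℝ}

lemma mono (h : IsInverseBranch c x m D ψ) (hED : E ⊆ D) : IsInverseBranch c x m E ψ where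
  continuousOn := h.continuousOn.mono hED
  leftInvOn := h.leftInvOn.mono hED
  apply_iterate := h.apply_iterate
  sameItinerary t ht u hu := h.sameItinerary t (hED ht) u (hED hu)

lemma comp (hψ : IsInverseBranch c x m D ψ) (hφ : IsInverseBranch c ((fc c)^[m] x) k E φ)
    (hmaps : MapsTo φ E D) : IsInverseBranch c x (m + k) E (ψ ∘ φ) where
  continuousOn := hψ.continuousOn.comp hφ.continuousOn hmaps
  leftInvOn t ht := by
    rw [add_comm, Function.iterate_add_apply, Function.comp_apply, hψ.leftInvOn (hmaps ht),
      hφ.leftInvOn ht]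
  apply_iterate := by
    rw [add_comm, Function.iterate_add_apply, Function.comp_apply, hφ.apply_iterate,
      hψ.apply_iterate]
  sameItinerary t ht u hu j hj := by
    rcases lt_or_ge j m with hjm | hmj
    · exact hψ.sameItinerary _ (hmaps ht) _ (hmaps hu) j hjm
    · obtain ⟨i, rfl⟩ := Nat.exists_eq_add_of_le' hmj
      simp only [Function.iterate_add_apply, Function.comp_apply, hψ.leftInvOn (hmaps ht),
        hψ.leftInvOn (hmaps hu)]
      exact hφ.sameItinerary t ht u hu i (by omega)

lemma sqrt (hx : 0 ≤ x) : IsInverseBranch c x 1 (Ici c) fun t => √(t - c) where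
  continuousOn := by fun_prop
  leftInvOn t ht := by simp [fc, Real.sq_sqrt (sub_nonneg.mpr (mem_Ici.mp ht))]
  apply_iterate := by simp [fc, Real.sqrt_sq hx]
  sameItinerary t _ u _ j hj := by
    obtain rfl := Nat.lt_one_iff.mp hj
    exact mul_nonneg (Real.sqrt_nonneg _) (Real.sqrt_nonneg _)

lemma neg_sqrt (hx : x ≤ 0) : IsInverseBranch c x 1 (Ici c) fun t => -√(t - c) where
  continuousOn := by fun_prop
  leftInvOn t ht := by simp [fc, Real.sq_sqrt (sub_nonneg.mpr (mem_Ici.mp ht))]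
  apply_iterate := by simp [fc, Real.sqrt_sq_eq_abs, abs_of_nonpos hx]
  sameItinerary t _ u _ j hj := by
    obtain rfl := Nat.lt_one_iff.mp hj
    simpa using mul_nonneg (Real.sqrt_nonneg (t - c)) (Real.sqrt_nonneg (u - c))

lemma nonpos (h : IsInverseBranch c x m D ψ) (hm : 0 < m) (hx : x < 0) (hxD : (fc c)^[m] x ∈ D)
    {t : ℝ} (ht : t ∈ D) : ψ t ≤ 0 := by
  have : 0 ≤ ψ t * ψ ((fc c)^[m] x) := h.sameItinerary t ht _ hxD 0 hm
  rw [h.apply_iterate] at this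
  exact nonpos_of_mul_nonneg_left this hx

lemma exists_add_of_iterate_nonneg (hc : c ≤ 0) (hψ : IsInverseBranch c x m (Ici c) ψ)
    (h : ∀ j < k, 0 ≤ (fc c)^[m + j] x) : ∃ φ, IsInverseBranch c x (m + k) (Ici c) φ := by
  induction k with
  | zero => exact ⟨ψ, hψ⟩
  | succ k ih =>
    obtain ⟨φ, hφ⟩ := ih fun j hj => h j (hj.trans k.lt_succ_self)
    exact ⟨_, hφ.comp (.sqrt (h k k.lt_succ_self)) fun t _ => hc.trans (Real.sqrt_nonneg _)⟩

end IsInverseBranch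

lemma exists_isInverseBranch_one_Icc {y v : ℝ} (hv : 0 ≤ v) :
    ∃ φ, IsInverseBranch c y 1 (Icc c (fc c v)) φ ∧ MapsTo φ (Icc c (fc c v)) (Icc (-v) v) := by
  have sqrt_le : ∀ t ∈ Icc c (fc c v), √(t - c) ≤ v := fun t ht =>
    Real.sqrt_le_iff.mpr ⟨hv, sub_le_iff_le_add.mpr ht.2⟩
  rcases le_total 0 y with hy | hy
  · exact ⟨_, (IsInverseBranch.sqrt hy).mono Icc_subset_Ici_self, fun t ht =>
      ⟨by linarith [Real.sqrt_nonneg (t - c)], sqrt_le t ht⟩⟩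
  · exact ⟨_, (IsInverseBranch.neg_sqrt hy).mono Icc_subset_Ici_self, fun t ht =>
      ⟨neg_le_neg (sqrt_le t ht), by linarith [Real.sqrt_nonneg (t - c)]⟩⟩

-- Pulls `[-v, v]` back into `[0, c² + c]`, then into `[c, 0]`, then into `[-v, v]`.
lemma exists_isInverseBranch_three_Icc {y v : ℝ} (hc : c ≤ 0) (hv : 0 ≤ v) (hvc : v ≤ -c)
    (hfv : 0 ≤ fc c v) (hfc : 0 ≤ fc c c) (hvf : v ≤ fc c (fc c c))
    (hy1 : fc c y ≤ 0) (hy2 : 0 ≤ fc c (fc c y)) :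
    ∃ φ, IsInverseBranch c y 3 (Icc (-v) v) φ ∧ MapsTo φ (Icc (-v) v) (Icc (-v) v) := by
  obtain ⟨φ, hφ, φ_maps⟩ := exists_isInverseBranch_one_Icc (c := c) (y := y) hv
  have neg_maps : MapsTo (fun t => -√(t - c)) (Icc c (fc c c)) (Icc c (fc c v)) := fun t ht => by
    have : √(t - c) ≤ -c :=
      Real.sqrt_le_iff.mpr ⟨by linarith, by rw [neg_sq]; exact sub_le_iff_le_add.mpr ht.2⟩
    exact ⟨by linarith, by linarith [Real.sqrt_nonneg (t - c)]⟩
  have pos_maps : MapsTo (fun t => √(t - c)) (Icc (-v) v) (Icc c (fc c c)) := fun t ht =>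
    ⟨hc.trans (Real.sqrt_nonneg _),
      Real.sqrt_le_iff.mpr ⟨hfc, sub_le_iff_le_add.mpr (ht.2.trans hvf)⟩⟩
  have hφ₂ := hφ.comp ((IsInverseBranch.neg_sqrt hy1).mono Icc_subset_Ici_self) neg_maps
  have hφ₃ := hφ₂.comp ((IsInverseBranch.sqrt hy2).mono
    (Icc_subset_Ici_self.trans (Ici_subset_Ici.mpr (by linarith)))) pos_maps
  exact ⟨_, hφ₃, (φ_maps.comp neg_maps).comp pos_maps⟩

end InverseBranch

section Parameters

variable {n : ℕ} {c : ℝ}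

lemma neg_two_le_of_iterate_succ_neg {j : ℕ} (h : (fc c)^[j + 1] c < 0) : -2 ≤ c := by
  by_contra! hlt
  have escape : ∀ i, -c ≤ (fc c)^[i + 1] c := by
    intro i
    induction i with
    | zero => simp only [zero_add, Function.iterate_one, fc]; nlinarith
    | succ i ih => rw [fc_iterate_succ]; nlinarith
  linarith [escape j]

lemma neg_two_le_of_mem_Kset (hK : c ∈ Kset n) : -2 ≤ c :=
  neg_two_le_of_iterate_succ_neg (hK.2.2 0).1

lemma lt_neg_one_of_mem_Kset (hn : 2 ≤ n) (hK : c ∈ Kset n) : c < -1 := by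
  have h : 0 < c ^ 2 + c := hK.2.1 1 le_rfl (by omega)
  nlinarith [hK.1]

lemma rootPreimage_le_neg_of_mem_Kset (hn : 3 ≤ n) (hK : c ∈ Kset n) : rootPreimage c ≤ -c := by
  have h1 : 0 < fc c c := hK.2.1 1 (by omega) (by omega)
  have h2 : 0 < fc c (fc c c) := hK.2.1 2 (by omega) (by omega)
  refine rootPreimage_le_of_root_le_fc (by linarith [hK.1]) ?_
  rw [fc_eq_fc_of_abs_eq_abs (abs_neg c)]
  exact root_le_of_fc_nonneg h1.le h2.le

lemma rootPreimage_le_fc_fc_of_mem_Kset (hn : 5 ≤ n) (hK : c ∈ Kset n) :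
    rootPreimage c ≤ fc c (fc c c) := by
  have h2 : 0 < fc c (fc c c) := hK.2.1 2 (by omega) (by omega)
  have h3 : 0 < fc c (fc c (fc c c)) := hK.2.1 3 (by omega) (by omega)
  have h4 : 0 < fc c (fc c (fc c (fc c c))) := hK.2.1 4 (by omega) (by omega)
  exact rootPreimage_le_of_root_le_fc h2.le (root_le_of_fc_nonneg h3.le h4.le)

lemma fc_iterate_sign_of_mem_Kset (hK : c ∈ Kset n) (k : ℕ) :
    fc c ((fc c)^[n + 3 * k] c) < 0 ∧ 0 < fc c (fc c ((fc c)^[n + 3 * k] c)) := by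
  simpa only [Function.iterate_succ_apply'] using hK.2.2 k

lemma exists_isInverseBranch_of_mem_Kset (hn : 5 ≤ n) (hK : c ∈ Kset n) (k : ℕ) :
    ∃ ψ, IsInverseBranch c c (n + 3 * k) (Icc (-rootPreimage c) (rootPreimage c)) ψ := by
  have hvc := rootPreimage_le_neg_of_mem_Kset (by omega) hK
  induction k with
  | zero =>
    obtain ⟨l, rfl⟩ := Nat.exists_eq_add_of_le (show 1 ≤ n by omega)
    obtain ⟨ψ, hψ⟩ := (IsInverseBranch.neg_sqrt hK.1.le).exists_add_of_iterate_nonneg hK.1.le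
      fun j (hj : j < l) => (hK.2.1 (1 + j) (by omega) (by omega)).le
    exact ⟨ψ, hψ.mono fun t ht => by rw [mem_Ici]; linarith [ht.1]⟩
  | succ k ih =>
    obtain ⟨ψ, hψ⟩ := ih
    obtain ⟨hy1, hy2⟩ := fc_iterate_sign_of_mem_Kset hK k
    obtain ⟨φ, hφ, φ_maps⟩ := exists_isInverseBranch_three_Icc hK.1.le (rootPreimage_nonneg c) hvc
      (fc_rootPreimage hK.1.le ▸ root_nonneg c) (hK.2.1 1 le_rfl (by omega)).le
      (rootPreimage_le_fc_fc_of_mem_Kset hn hK) hy1.le hy2.le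
    exact ⟨ψ ∘ φ, hψ.comp hφ φ_maps⟩

end Parameters

section PeriodicPoint

variable {g ψ : ℝ → ℝ} {s v y : ℝ}

lemma exists_eq_of_strictMonoOn (hψ : ContinuousOn ψ (Icc (-v) v))
    (hmono : StrictMonoOn ψ (Icc (-v) v)) (hg : Continuous g) (hys : |y| < s) (hsv : s ≤ v)
    (hgs : ψ s ≤ g s) (hgv : g v ≤ ψ y) :
    ∃ t ∈ Icc s v, g t = ψ t ∧ ψ y < ψ t ∧ ψ (-v) < ψ y := by
  obtain ⟨neg_s_lt, lt_s⟩ := abs_lt.mp hys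
  have hy : y ∈ Icc (-v) v := ⟨by linarith, by linarith⟩
  have hv : v ∈ Icc (-v) v := ⟨by linarith, le_rfl⟩
  have hsub : Icc s v ⊆ Icc (-v) v := Icc_subset_Icc_left (by linarith)
  have hψv : ψ y < ψ v := hmono hy hv (by linarith)
  obtain ⟨t, ht, hzero⟩ := intermediate_value_Icc' hsv (hg.continuousOn.sub (hψ.mono hsub))
    (show (0 : ℝ) ∈ Icc (g v - ψ v) (g s - ψ s) from ⟨by linarith, by linarith⟩)
  exact ⟨t, ht, sub_eq_zero.mp hzero, hmono hy (hsub ht) (by linarith [ht.1]),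
    hmono (left_mem_Icc.mpr (by linarith)) hy (by linarith)⟩

lemma exists_eq_of_injOn (hψ : ContinuousOn ψ (Icc (-v) v)) (hinj : InjOn ψ (Icc (-v) v))
    (hg : Continuous g) (hys : |y| < s) (hsv : s ≤ v) (hgs : ∀ t, |t| = s → ψ t ≤ g t)
    (hgv : ∀ t, |t| = v → g t ≤ ψ y) :
    ∃ a t, |a| = v ∧ |t| ∈ Icc s v ∧ g t = ψ t ∧ ψ a < ψ y ∧ ψ y < ψ t := by
  have hs0 : 0 ≤ s := (abs_nonneg y).trans hys.le
  have hv0 : 0 ≤ v := hs0.trans hsv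
  rcases hψ.strictMonoOn_of_injOn_Icc' (by linarith) hinj with hmono | hanti
  · obtain ⟨t, ht, htg, hyt, hvy⟩ := exists_eq_of_strictMonoOn hψ hmono hg hys hsv
      (hgs s (abs_of_nonneg hs0)) (hgv v (abs_of_nonneg hv0))
    exact ⟨-v, t, by rw [abs_neg, abs_of_nonneg hv0],
      by rwa [abs_of_nonneg (hs0.trans ht.1)], htg, hvy, hyt⟩
  · have neg_maps : MapsTo (fun t : ℝ => -t) (Icc (-v) v) (Icc (-v) v) := fun t ht =>
      ⟨neg_le_neg ht.2, neg_le.mp ht.1⟩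
    obtain ⟨t, ht, htg, hyt, hvy⟩ := exists_eq_of_strictMonoOn (ψ := fun t => ψ (-t))
      (g := fun t => g (-t)) (y := -y) (hψ.comp continuousOn_neg neg_maps)
      (fun t ht u hu htu => hanti (neg_maps hu) (neg_maps ht) (neg_lt_neg htu))
      (hg.comp continuous_neg) (by rwa [abs_neg]) hsv
      (hgs (-s) (by rw [abs_neg, abs_of_nonneg hs0]))
      (by rw [neg_neg]; exact hgv (-v) (by rw [abs_neg, abs_of_nonneg hv0]))
    rw [neg_neg] at hyt hvy
    exact ⟨v, -t, abs_of_nonneg hv0, by rwa [abs_neg, abs_of_nonneg (hs0.trans ht.1)], htg,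
      by rwa [neg_neg] at hvy, hyt⟩

variable {c : ℝ} {m : ℕ}

lemma continuous_fc_iterate (c : ℝ) (m : ℕ) : Continuous (fc c)^[m] :=
  Continuous.iterate (by unfold fc; fun_prop) m

lemma mul_sqrt_mul_pow_three_le {D E γ δ M : ℝ} (hD : 0 ≤ D) (hE : 0 ≤ E) (hγ : 0 ≤ γ)
    (hδ : 0 ≤ δ) (hupper : E * D * γ ^ 2 ≤ M) (hlower : δ ^ 2 ≤ D * γ) :
    E * √γ * δ ^ 3 ≤ M * √D := by
  have le_sqrt_mul : δ ≤ √D * √γ := by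
    rw [← Real.sqrt_mul hD]
    exact Real.le_sqrt_of_sq_le hlower
  calc E * √γ * δ ^ 3 ≤ E * √γ * (√D * √γ) ^ 3 := by gcongr
    _ = E * √D ^ 2 * (√γ ^ 2) ^ 2 * √D := by ring
    _ = E * D * γ ^ 2 * √D := by rw [Real.sq_sqrt hD, Real.sq_sqrt hγ]
    _ ≤ M * √D := by gcongr

lemma absDeriv_add_three_le {a p : ℝ} (hc : c ≤ 0) (hv : rootPreimage c ≤ 2)
    (hac : SameItinerary c m a c) (hcp : SameItinerary c m c p) (hap : SameItinerary c m a p)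
    (a_lt_c : a < c) (c_lt_p : c < p) (hy : |(fc c)^[m] c| ≤ root c - 1 / 2)
    (ha : |(fc c)^[m] a| = rootPreimage c)
    (hp : |(fc c)^[m] p| ∈ Icc (root c) (rootPreimage c)) (hper : (fc c)^[m + 3] p = p) :
    absDeriv c (m + 3) p ≤ 32768 * √(absDeriv c m c) := by
  have hDp := absDeriv_nonneg c m p
  have hsv := root_le_rootPreimage c
  have lower : (1 / 2) ^ 2 ≤ 4 * absDeriv c m c * (p - c) := by
    refine hac.sq_le_mul_absDeriv_mul_sub hcp hap a_lt_c c_lt_p (by norm_num) ?_ ?_ ?_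
    · linarith [abs_sub_abs_le_abs_sub ((fc c)^[m] a) ((fc c)^[m] c)]
    · rw [abs_sub_comm]
      linarith [abs_sub_abs_le_abs_sub ((fc c)^[m] p) ((fc c)^[m] c), hp.1]
    · linarith [abs_sub ((fc c)^[m] a) ((fc c)^[m] p), hp.2]
  have upper : absDeriv c m p * absDeriv c m c * (p - c) ^ 2 ≤ 16 := by
    have dist_le : |(fc c)^[m] p - (fc c)^[m] c| ≤ 4 := by
      linarith [abs_sub ((fc c)^[m] p) ((fc c)^[m] c), hp.2]
    calc _ ≤ ((fc c)^[m] p - (fc c)^[m] c) ^ 2 := hcp.symm.absDeriv_mul_absDeriv_mul_sq_le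
      _ ≤ 4 ^ 2 := sq_le_sq.mpr (dist_le.trans (le_abs_self 4))
      _ = 16 := by norm_num
  have return_eq : (fc c)^[3] ((fc c)^[m] p) = p := by
    rw [← Function.iterate_add_apply, add_comm, hper]
  calc absDeriv c (m + 3) p
      = absDeriv c m p * absDeriv c 3 ((fc c)^[m] p) := absDeriv_add c m 3 p
    _ ≤ absDeriv c m p * (32 * √(p - c)) := by
        have tail := absDeriv_three_le hc hv hp.1 hp.2
        rw [return_eq] at tail
        gcongr
    _ = 32 * (absDeriv c m p * √(p - c)) := by ring
    _ ≤ 32768 * √(absDeriv c m c) := by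
        linarith [mul_sqrt_mul_pow_three_le (δ := 1 / 4) (absDeriv_nonneg c m c) hDp
          (by linarith) (by norm_num) upper (by linarith)]

lemma IsInverseBranch.exists_periodic_absDeriv_le (hm : 0 < m)
    (hψ : IsInverseBranch c c m (Icc (-rootPreimage c) (rootPreimage c)) ψ) (hc : c ≤ -1)
    (hv : rootPreimage c ≤ 2) (hy : |(fc c)^[m] c| ≤ root c - 1 / 2) :
    ∃ x ∈ Icc c (c ^ 2 + c), (fc c)^[m + 3] x = x ∧
      absDeriv c (m + 3) x ≤ 32768 * √(absDeriv c m c) := by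
  have hc0 : c ≤ 0 := by linarith
  have hsv := root_le_rootPreimage c
  have image_nonneg : 0 ≤ c ^ 2 + c := by nlinarith
  have hyD : (fc c)^[m] c ∈ Icc (-rootPreimage c) (rootPreimage c) := abs_le.mp (by linarith)
  obtain ⟨a, t, ha, ht, hψt, hac, hct⟩ := exists_eq_of_injOn (s := root c) hψ.continuousOn
    hψ.leftInvOn.injOn (continuous_fc_iterate c 3) (by linarith) hsv
    (fun t ht => by
      rw [fc_iterate_three_of_abs_eq_root hc0 ht]
      exact (hψ.nonpos hm (by linarith) hyD (abs_le.mp (ht.trans_le hsv))).trans image_nonneg)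
    (fun t ht => by rw [fc_iterate_three_of_abs_eq_rootPreimage hc0 ht, hψ.apply_iterate])
  have haD := abs_le.mp ha.le
  have htD := abs_le.mp ht.2
  have sameItinerary_base := hψ.sameItinerary _ hyD
  rw [hψ.apply_iterate] at hac hct sameItinerary_base
  have hper : (fc c)^[m + 3] (ψ t) = ψ t := by
    rw [add_comm, Function.iterate_add_apply, hψ.leftInvOn htD, hψt]
  exact ⟨ψ t, ⟨hct.le, (hψ.nonpos hm (by linarith) hyD htD).trans image_nonneg⟩, hper,
    absDeriv_add_three_le hc0 hv (sameItinerary_base a haD).symm (sameItinerary_base t htD)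
      (hψ.sameItinerary a haD t htD) hac hct hy (by rwa [hψ.leftInvOn haD])
      (by rwa [hψ.leftInvOn htD]) hper⟩

end PeriodicPoint

theorem stmt_7 :
    ∃ C : ℝ, 0 < C ∧ ∀ n : ℕ, 5 ≤ n → ∀ c ∈ Kset n, ∀ k : ℕ,
      ∃ x ∈ Set.Icc c (c ^ 2 + c), (fc c)^[n + 3 * k + 3] x = x ∧
        ∏ j ∈ Finset.range (n + 3 * k + 3), |2 * (fc c)^[j] x| ≤
          C * Real.sqrt (∏ j ∈ Finset.range (n + 3 * k), |2 * (fc c)^[j] c|) := by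
  refine ⟨32768, by norm_num, fun n hn c hK k => ?_⟩
  have hc : c ≤ -1 := (lt_neg_one_of_mem_Kset (by omega) hK).le
  obtain ⟨ψ, hψ⟩ := exists_isInverseBranch_of_mem_Kset hn hK k
  obtain ⟨hy1, hy2⟩ := fc_iterate_sign_of_mem_Kset hK k
  exact hψ.exists_periodic_absDeriv_le (by omega) hc
    (rootPreimage_le_two (neg_two_le_of_mem_Kset hK)) (abs_le_root_sub_half hc hy1.le hy2.le)
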